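/- Let k ∈ ℤ^d lie in the first octant with |k|_∞ ≥ 1, let 1 ≤ γ₁ ≤ γ ≤ ∞, and suppose supp 𝓕_x f(t,·) ⊂ k+[0,1)^d for all t > 0. Then ‖∫₀^t e^{(t−τ)Δ} f(τ) dτ‖_{L^γ_t L²_x((0,∞)×ℝ^d)} ≤ C |k|^{−2/γ − 2/γ₁'} ‖f‖_{L^{γ₁}_t L²_x}, where 1/γ₁ + 1/γ₁' = 1 (i.e. the gain is |k|^{−2(1/γ + 1 − 1/γ₁)}). -/

import Mathlib

open MeasureTheory FourierTransform ENNReal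

noncomputable section

abbrev Vd (d : ℕ) := EuclideanSpace ℝ (Fin d)

def cube (d : ℕ) (k : Fin d → ℤ) : Set (Vd d) :=
  {ξ | ∀ i, (k i : ℝ) ≤ ξ i ∧ ξ i < k i + 1}

def toV {d : ℕ} (k : Fin d → ℤ) : Vd d :=
  (WithLp.equiv 2 (Fin d → ℝ)).symm fun i => (k i : ℝ)

/-- The heat semigroup e^{tΔ} = 𝓕⁻¹ e^{−t|ξ|²} 𝓕. -/
def heat (d : ℕ) (t : ℝ) (f : Vd d → ℂ) : Vd d → ℂ :=
  𝓕⁻ (fun ξ => (Real.exp (-(t * ‖ξ‖ ^ 2)) : ℂ) * 𝓕 f ξ)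

/-- The Duhamel term ∫₀^t e^{(t−τ)Δ} f(τ) dτ. -/
def duhamel (d : ℕ) (f : ℝ → Vd d → ℂ) (t : ℝ) : Vd d → ℂ :=
  fun x => ∫ τ in Set.Ioc (0:ℝ) t, heat d (t - τ) (f τ) x

/-- The L^γ norm in time on (0,∞) of a nonnegative extended-real quantity,
for γ ∈ [1,∞]. -/
def timeNorm (γ : ℝ≥0∞) (F : ℝ → ℝ≥0∞) : ℝ≥0∞ :=
  if γ = ∞ then essSup F (volume.restrict (Set.Ioi (0:ℝ)))
  else (∫⁻ t in Set.Ioi (0:ℝ), F t ^ γ.toReal) ^ (1 / γ.toReal)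


def ker (K : ℝ) (s : ℝ) : ℝ≥0∞ := (Set.Ici (0:ℝ)).indicator (fun s => ENNReal.ofReal (Real.exp (-(s * K)))) s

lemma ker_meas (K : ℝ) : Measurable (ker K) := by
  apply Measurable.indicator _ measurableSet_Ici
  fun_prop

lemma ker_le_one {K : ℝ} (hK : 0 < K) (s : ℝ) : ker K s ≤ 1 := by
  unfold ker
  by_cases hs : s ∈ Set.Ici (0:ℝ)
  · rw [Set.indicator_of_mem hs]
    apply ENNReal.ofReal_le_one.2
    apply Real.exp_le_one_iff.2
    have : 0 ≤ s := hs
    have := mul_nonneg this hK.le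
    linarith
  · rw [Set.indicator_of_notMem hs]; exact zero_le

lemma ker_int {K : ℝ} (hK : 0 < K) : ∫⁻ s, ker K s = (ENNReal.ofReal K)⁻¹ := by
  unfold ker
  rw [lintegral_indicator measurableSet_Ici, ← restrict_Ioi_eq_restrict_Ici]
  have h1 : ∀ s : ℝ, -(s * K) = -K * s := fun s => by ring
  simp only [h1]
  rw [← ofReal_integral_eq_lintegral_ofReal]
  · rw [integral_exp_mul_Ioi (by linarith)]
    rw [← ENNReal.ofReal_inv_of_pos hK]
    congr 1
    simp
  · exact integrableOn_exp_mul_Ioi (by linarith) 0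
  · exact Filter.Eventually.of_forall fun s => (Real.exp_pos _).le

lemma conv_pow {K : ℝ} (hK : 0 < K) {p : ℝ} (hp : 1 ≤ p) {g : ℝ → ℝ≥0∞} (hg : Measurable g) (t : ℝ) :
    (∫⁻ τ, ker K (t - τ) * g τ) ^ p ≤
      ((ENNReal.ofReal K)⁻¹) ^ (p - 1) * ∫⁻ τ, ker K (t - τ) * g τ ^ p := by
  have hk : Measurable (fun τ => ker K (t - τ)) := (ker_meas K).comp (by fun_prop)
  set μ := (volume : Measure ℝ).withDensity (fun τ => ker K (t - τ)) with hμ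
  have e1 : ∀ f : ℝ → ℝ≥0∞, Measurable f → ∫⁻ τ, ker K (t - τ) * f τ = ∫⁻ τ, f τ ∂μ := by
    intro f hf
    rw [hμ, lintegral_withDensity_eq_lintegral_mul _ hk hf]; rfl
  rw [e1 g hg, e1 _ (hg.pow_const p)]
  have hu : μ Set.univ = (ENNReal.ofReal K)⁻¹ := by
    rw [hμ, withDensity_apply _ MeasurableSet.univ, setLIntegral_univ,
      lintegral_sub_left_eq_self (fun s => ker K s) t, ker_int hK]
  rcases eq_or_lt_of_le hp with rfl | hp1
  · simp
  have hpq := Real.HolderConjugate.conjExponent hp1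
  have := ENNReal.lintegral_mul_le_Lp_mul_Lq μ hpq (hg.aemeasurable) (aemeasurable_const (b := (1:ℝ≥0∞)))
  simp only [Pi.mul_apply, mul_one, ENNReal.one_rpow, lintegral_const, one_mul, hu] at this
  calc _ ≤ _ := ENNReal.rpow_le_rpow this (by linarith)
    _ = _ := by
      rw [ENNReal.mul_rpow_of_nonneg _ _ (by linarith), ← ENNReal.rpow_mul, ← ENNReal.rpow_mul, mul_comm]
      congr 2
      · rw [Real.conjExponent]; field_simp
      · rw [one_div, inv_mul_cancel₀ (by linarith), ENNReal.rpow_one]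

lemma conv_sup {K : ℝ} (hK : 0 < K) {p : ℝ} (hp : 1 ≤ p) {g : ℝ → ℝ≥0∞} (hg : Measurable g) (t : ℝ) :
    (∫⁻ τ, ker K (t - τ) * g τ) ^ p ≤
      ((ENNReal.ofReal K)⁻¹) ^ (p - 1) * ∫⁻ τ, g τ ^ p := by
  refine (conv_pow hK hp hg t).trans ?_
  gcongr with τ
  exact mul_le_of_le_one_left zero_le (ker_le_one hK _)

lemma conv_meas {K : ℝ} {g : ℝ → ℝ≥0∞} (hg : Measurable g) :
    Measurable (fun t => ∫⁻ τ, ker K (t - τ) * g τ) := by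
  apply Measurable.lintegral_prod_right' (f := fun q : ℝ × ℝ => ker K (q.1 - q.2) * g q.2)
  exact ((ker_meas K).comp (by fun_prop)).mul (hg.comp measurable_snd)

lemma conv_int {K : ℝ} (hK : 0 < K) {p : ℝ} (hp : 1 ≤ p) {g : ℝ → ℝ≥0∞} (hg : Measurable g) :
    ∫⁻ t, (∫⁻ τ, ker K (t - τ) * g τ) ^ p ≤
      ((ENNReal.ofReal K)⁻¹) ^ p * ∫⁻ τ, g τ ^ p := by
  have ha0 : (ENNReal.ofReal K)⁻¹ ≠ 0 := by simp
  have hat : (ENNReal.ofReal K)⁻¹ ≠ ∞ := by simp [hK]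
  calc _ ≤ ∫⁻ t, ((ENNReal.ofReal K)⁻¹) ^ (p - 1) * ∫⁻ τ, ker K (t - τ) * g τ ^ p :=
        lintegral_mono fun t => conv_pow hK hp hg t
    _ = ((ENNReal.ofReal K)⁻¹) ^ (p - 1) * ∫⁻ t, ∫⁻ τ, ker K (t - τ) * g τ ^ p :=
        lintegral_const_mul _ (conv_meas (hg.pow_const p))
    _ = ((ENNReal.ofReal K)⁻¹) ^ (p - 1) * ∫⁻ τ, ∫⁻ t, ker K (t - τ) * g τ ^ p := by
        rw [lintegral_lintegral_swap]
        apply Measurable.aemeasurable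
        exact ((ker_meas K).comp (by fun_prop)).mul ((hg.pow_const p).comp measurable_snd)
    _ = ((ENNReal.ofReal K)⁻¹) ^ (p - 1) * ∫⁻ τ, (ENNReal.ofReal K)⁻¹ * g τ ^ p := by
        congr 2 with τ
        rw [lintegral_mul_const _ (show Measurable (fun t => ker K (t - τ)) from (ker_meas K).comp (by fun_prop)),
          lintegral_sub_right_eq_self (fun s => ker K s) τ, ker_int hK]
    _ = _ := by
        rw [lintegral_const_mul _ (hg.pow_const p), ← mul_assoc]
        congr 1
        conv_lhs => rw [← ENNReal.rpow_one (ENNReal.ofReal K)⁻¹, ← ENNReal.rpow_mul, one_mul]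
        rw [← ENNReal.rpow_add _ _ ha0 hat]; simp

lemma timeNorm_mono (γ : ℝ≥0∞) {F G : ℝ → ℝ≥0∞} (h : ∀ t, 0 < t → F t ≤ G t) :
    timeNorm γ F ≤ timeNorm γ G := by
  unfold timeNorm
  split_ifs
  · refine essSup_mono_ae ?_
    filter_upwards [ae_restrict_mem measurableSet_Ioi] with t ht using h t ht
  · gcongr 1
    apply setLIntegral_mono' measurableSet_Ioi
    intro t ht
    exact ENNReal.rpow_le_rpow (h t ht) (by simp)

lemma young {K : ℝ} (hK : 0 < K) {γ γ₁ : ℝ≥0∞} (h1 : 1 ≤ γ₁) (h2 : γ₁ ≤ γ) {g : ℝ → ℝ≥0∞} (hg : Measurable g) :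
    timeNorm γ (fun t => ∫⁻ τ in Set.Ioc 0 t, ENNReal.ofReal (Real.exp (-((t - τ) * K))) * g τ) ≤
      ((ENNReal.ofReal K)⁻¹) ^ ((γ⁻¹).toReal + 1 - (γ₁⁻¹).toReal) * timeNorm γ₁ g := by
  have ha0 : (ENNReal.ofReal K)⁻¹ ≠ 0 := by simp
  have hat : (ENNReal.ofReal K)⁻¹ ≠ ∞ := by simp [hK]
  set a := (ENNReal.ofReal K)⁻¹ with ha
  set g₁ := (Set.Ioi (0:ℝ)).indicator g with hg₁
  have hg₁m : Measurable g₁ := hg.indicator measurableSet_Ioi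
  set G := fun t => ∫⁻ τ, ker K (t - τ) * g₁ τ with hG
  have hGm : Measurable G := conv_meas hg₁m
  refine (timeNorm_mono γ (G := G) fun t ht => ?_).trans ?_
  · rw [← lintegral_indicator measurableSet_Ioc]
    refine lintegral_mono fun τ => ?_
    by_cases hτ : τ ∈ Set.Ioc 0 t
    · rw [Set.indicator_of_mem hτ, hg₁, Set.indicator_of_mem (show τ ∈ Set.Ioi (0:ℝ) from hτ.1), ker,
        Set.indicator_of_mem (show t - τ ∈ Set.Ici (0:ℝ) from sub_nonneg.2 hτ.2)]
    · rw [Set.indicator_of_notMem hτ]; exact zero_le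
  by_cases hp : γ₁ = ∞
  · have hγ : γ = ∞ := by rw [hp] at h2; exact top_le_iff.1 h2
    subst hp hγ
    simp only [timeNorm, if_true, ENNReal.inv_top, ENNReal.toReal_zero, zero_add, sub_zero, ENNReal.rpow_one]
    refine essSup_le_of_ae_le _ ?_
    refine Filter.Eventually.of_forall fun t => ?_
    set S := essSup g (volume.restrict (Set.Ioi 0))
    have : ∀ᵐ τ, g₁ τ ≤ S := by
      have := ENNReal.ae_le_essSup (μ := volume.restrict (Set.Ioi (0:ℝ))) g
      rw [ae_restrict_iff' measurableSet_Ioi] at this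
      filter_upwards [this] with τ h
      by_cases hτ : τ ∈ Set.Ioi (0:ℝ)
      · rw [hg₁, Set.indicator_of_mem hτ]; exact h hτ
      · rw [hg₁, Set.indicator_of_notMem hτ]; exact zero_le
    calc G t ≤ ∫⁻ τ, ker K (t - τ) * S := by
          apply lintegral_mono_ae
          filter_upwards [this] with τ h
          gcongr
      _ = a * S := by
          rw [lintegral_mul_const _ (show Measurable (fun τ => ker K (t - τ)) from (ker_meas K).comp (by fun_prop)),
            lintegral_sub_left_eq_self (fun s => ker K s) t, ker_int hK]
  · set p := γ₁.toReal with hpdef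
    have hp1 : 1 ≤ p := by
      rw [hpdef, ← ENNReal.toReal_one]; exact (ENNReal.toReal_le_toReal (by simp) hp).2 h1
    have hp0 : 0 < p := by linarith
    have hI : ∫⁻ t in Set.Ioi (0:ℝ), g t ^ p = ∫⁻ t, g₁ t ^ p := by
      rw [← lintegral_indicator measurableSet_Ioi]
      congr 1 with t
      by_cases hτ : t ∈ Set.Ioi (0:ℝ)
      · rw [hg₁, Set.indicator_of_mem hτ, Set.indicator_of_mem hτ]
      · rw [hg₁, Set.indicator_of_notMem hτ, Set.indicator_of_notMem hτ, ENNReal.zero_rpow_of_pos hp0]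
    have hN : timeNorm γ₁ g = (∫⁻ t, g₁ t ^ p) ^ (1 / p) := by
      rw [timeNorm, if_neg hp, ← hpdef, hI]
    rw [hN]
    set I := ∫⁻ t, g₁ t ^ p
    have hs : ∀ t, G t ^ p ≤ a ^ (p - 1) * I := fun t => conv_sup hK hp1 hg₁m t
    rw [ENNReal.toReal_inv, ENNReal.toReal_inv, ← hpdef]
    by_cases hγ : γ = ∞
    · subst hγ
      simp only [timeNorm, if_true, ENNReal.toReal_top, _root_.inv_zero, zero_add]
      refine essSup_le_of_ae_le _ ?_
      refine Filter.Eventually.of_forall fun t => ?_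
      calc G t = (G t ^ p) ^ (1 / p) := by
            rw [← ENNReal.rpow_mul, mul_one_div_cancel hp0.ne', ENNReal.rpow_one]
        _ ≤ (a ^ (p - 1) * I) ^ (1 / p) := ENNReal.rpow_le_rpow (hs t) (by positivity)
        _ = _ := by
            rw [ENNReal.mul_rpow_of_nonneg _ _ (by positivity), ← ENNReal.rpow_mul]
            congr 2; field_simp
    · rw [timeNorm, if_neg hγ]
      set q := γ.toReal with hq
      have hpq : p ≤ q := (ENNReal.toReal_le_toReal hp hγ).2 h2
      have hq0 : 0 < q := by linarith
      have hr : 0 ≤ (q - p) / p := div_nonneg (by linarith) hp0.le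
      have key : ∫⁻ t in Set.Ioi (0:ℝ), G t ^ q ≤ (a ^ (p - 1) * I) ^ ((q - p) / p) * (a ^ p * I) := by
        calc _ ≤ ∫⁻ t, G t ^ q := setLIntegral_le_lintegral _ _
          _ = ∫⁻ t, (G t ^ p) ^ ((q - p) / p) * G t ^ p := by
            congr 1 with t
            rw [← ENNReal.rpow_mul, ← ENNReal.rpow_add_of_nonneg _ _ (by positivity) hp0.le]
            congr 1; field_simp; ring
          _ ≤ ∫⁻ t, (a ^ (p - 1) * I) ^ ((q - p) / p) * G t ^ p := by
            gcongr with t; exact hs t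
          _ = (a ^ (p - 1) * I) ^ ((q - p) / p) * ∫⁻ t, G t ^ p :=
            lintegral_const_mul _ (hGm.pow_const p)
          _ ≤ _ := by gcongr; exact conv_int hK hp1 hg₁m
      calc _ ≤ ((a ^ (p - 1) * I) ^ ((q - p) / p) * (a ^ p * I)) ^ (1 / q) :=
            ENNReal.rpow_le_rpow key (by positivity)
        _ = (a ^ ((p - 1) * ((q - p) / p) + p) * I ^ (((q - p) / p) + 1)) ^ (1 / q) := by
            congr 1
            rw [ENNReal.mul_rpow_of_nonneg _ _ hr, ← ENNReal.rpow_mul, ENNReal.rpow_add _ _ ha0 hat,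
              ENNReal.rpow_add_of_nonneg _ _ hr zero_le_one, ENNReal.rpow_one]
            ring
        _ = _ := by
            rw [ENNReal.mul_rpow_of_nonneg _ _ (by positivity), ← ENNReal.rpow_mul, ← ENNReal.rpow_mul]
            congr 2
            · field_simp; ring
            · field_simp; ring

lemma fourier_cont {d : ℕ} {f : Vd d → ℂ} (hf : Integrable f) : Continuous (𝓕 f) := by
  exact VectorFourier.fourierIntegral_continuous Real.continuous_fourierChar
    (L := innerₗ (Vd d)) continuous_inner hf

lemma fourier_undef {d : ℕ} {f : Vd d → ℂ} (hf : ¬ Integrable f) : 𝓕 f = 0 := by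
  ext w
  rw [Real.fourier_eq]
  exact integral_undef fun h => hf ((Real.fourierIntegral_convergent_iff w).1 h)

lemma fourierInv_eq_comp {d : ℕ} (f : Vd d → ℂ) : 𝓕⁻ f = fun x => 𝓕 f (-x) := by
  ext x; exact Real.fourierInv_eq_fourier_neg f x

lemma fourierInv_continuous {d : ℕ} (f : Vd d → ℂ) : Continuous (𝓕⁻ f) := by
  rw [fourierInv_eq_comp]
  by_cases hf : Integrable f
  · exact (fourier_cont hf).comp continuous_neg
  · rw [fourier_undef hf]; exact continuous_const

lemma plancherel {d : ℕ} {f : Vd d → ℂ} (hf : Integrable f) (hf2 : MemLp f 2) :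
    eLpNorm (𝓕 f) 2 volume = eLpNorm f 2 volume := by
  set F : Lp (α := Vd d) ℂ 2 volume := hf2.toLp f with hF
  have key : ∀ᵐ x ∂(volume : Measure (Vd d)), (𝓕 F : Lp ℂ 2 (volume : Measure (Vd d))) x = 𝓕 f x := by
    apply ae_eq_of_integral_contDiff_smul_eq
    · exact (Lp.memLp _).locallyIntegrable (by norm_num)
    · exact (fourier_cont hf).locallyIntegrable
    · intro g hg hgc
      have hgc' : HasCompactSupport (fun x => (g x : ℂ)) := hgc.comp_left (g := fun r : ℝ => (r : ℂ)) (by simp)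
      have hg' : ContDiff ℝ (⊤ : ℕ∞) (fun x => (g x : ℂ)) := Complex.ofRealCLM.contDiff.comp hg
      set φ := hgc'.toSchwartzMap hg' with hφ
      have hφx : ∀ x, φ x = (g x : ℂ) := fun x => rfl
      have h1 := congrArg (fun T => T φ) (Lp.fourier_toTemperedDistribution_eq F)
      simp only [TemperedDistribution.fourier_apply, Lp.toTemperedDistribution_apply] at h1
      have h2 : ∫ ξ, 𝓕 (φ : Vd d → ℂ) ξ • f ξ = ∫ x, φ x • 𝓕 f x := by
        simpa using! VectorFourier.integral_fourierIntegral_smul_eq_flip (L := innerₗ (Vd d))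
          Real.continuous_fourierChar continuous_inner φ.integrable hf
      have h3 : ∫ x, (𝓕 φ) x • F x = ∫ ξ, 𝓕 (φ : Vd d → ℂ) ξ • f ξ := by
        apply integral_congr_ae
        filter_upwards [hf2.coeFn_toLp] with x hx
        rw [hF, hx]
        rfl
      simp only [hφx] at h1 h2
      rw [h3, h2] at h1
      simpa using h1.symm
  rw [← eLpNorm_congr_ae key, ← eLpNorm_congr_ae hf2.coeFn_toLp, ← Lp.enorm_def, ← Lp.enorm_def]
  have := Lp.norm_fourier_eq F
  rw [← ofReal_norm, ← ofReal_norm, this]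

lemma norm_le_cube {d : ℕ} {k : Fin d → ℤ} (hk : ∀ i, 0 ≤ k i) {ξ : Vd d} (hξ : ξ ∈ cube d k) :
    ‖toV k‖ ^ 2 ≤ ‖ξ‖ ^ 2 := by
  rw [EuclideanSpace.norm_sq_eq, EuclideanSpace.norm_sq_eq]
  apply Finset.sum_le_sum
  intro i _
  have h0 : (0:ℝ) ≤ k i := by exact_mod_cast hk i
  have h1 := (hξ i).1
  have : toV k i = (k i : ℝ) := rfl
  rw [this, Real.norm_eq_abs, Real.norm_eq_abs, sq_abs, sq_abs]
  nlinarith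

lemma cube_bounded (d : ℕ) (k : Fin d → ℤ) : ∃ K : Set (Vd d), IsCompact K ∧ cube d k ⊆ K := by
  refine ⟨(EuclideanSpace.equiv (Fin d) ℝ).symm '' (Set.univ.pi fun i => Set.Icc (k i : ℝ) (k i + 1)), ?_, ?_⟩
  · exact (isCompact_univ_pi fun i => isCompact_Icc).image (ContinuousLinearEquiv.continuous _)
  · intro ξ hξ
    refine ⟨EuclideanSpace.equiv (Fin d) ℝ ξ, ?_, by simp⟩
    intro i _
    exact ⟨(hξ i).1, (hξ i).2.le⟩

lemma heat_bound {d : ℕ} {k : Fin d → ℤ} (hk : ∀ i, 0 ≤ k i) {f : Vd d → ℂ}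
    (hs : Function.support (𝓕 f) ⊆ cube d k) {s : ℝ} (hs0 : 0 ≤ s) :
    eLpNorm (heat d s f) 2 volume ≤
      ENNReal.ofReal (Real.exp (-(s * ‖toV k‖ ^ 2))) * eLpNorm f 2 volume := by
  by_cases hf : Integrable f
  swap
  · have : heat d s f = 0 := by
      ext x
      rw [heat, fourier_undef hf, Real.fourierInv_eq]
      simp
    rw [this]; simp
  by_cases h2 : eLpNorm f 2 volume = ∞
  · rw [h2, ENNReal.mul_top]
    · exact le_top
    · simp [Real.exp_pos]
  have hm : MemLp f 2 := ⟨hf.1, lt_top_iff_ne_top.2 h2⟩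
  rw [← plancherel hf hm]
  set v : Vd d → ℂ := fun ξ => (Real.exp (-(s * ‖ξ‖ ^ 2)) : ℂ) * 𝓕 f ξ with hv
  have hvc : Continuous v := by
    apply Continuous.mul _ (fourier_cont hf)
    fun_prop
  obtain ⟨Q, hQ, hQs⟩ := cube_bounded d k
  have hvs : HasCompactSupport v := by
    apply HasCompactSupport.intro hQ
    intro x hx
    have : 𝓕 f x = 0 := by
      by_contra h
      exact hx (hQs (hs h))
    simp [hv, this]
  have e1 : eLpNorm (heat d s f) 2 volume = eLpNorm v 2 volume := by
    rw [← plancherel (hvc.integrable_of_hasCompactSupport hvs) (hvc.memLp_of_hasCompactSupport hvs)]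
    change eLpNorm (𝓕⁻ v) 2 volume = _
    rw [fourierInv_eq_comp]
    exact eLpNorm_comp_measurePreserving (fourier_cont (hvc.integrable_of_hasCompactSupport hvs)).aestronglyMeasurable
      (Measure.measurePreserving_neg volume)
  rw [e1]
  have h3 : ∀ᵐ ξ, ‖v ξ‖ ≤ Real.exp (-(s * ‖toV k‖ ^ 2)) * ‖𝓕 f ξ‖ := by
    refine Filter.Eventually.of_forall fun ξ => ?_
    by_cases h : 𝓕 f ξ = 0
    · simp [hv, h]
    · have := norm_le_cube hk (hs h)
      rw [hv]
      simp only [norm_mul, Complex.norm_real, Real.norm_eq_abs, Real.abs_exp]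
      gcongr
  exact eLpNorm_le_mul_eLpNorm_of_ae_le_mul h3 2

lemma mink_sq {X Y : Type*} [MeasurableSpace X] [MeasurableSpace Y] (ν : Measure X) (μ : Measure Y)
    [SFinite ν] [SFinite μ] {w : X × Y → ℝ≥0∞} (hw : Measurable w) :
    ∫⁻ x, (∫⁻ y, w (x, y) ∂μ) ^ 2 ∂ν ≤ (∫⁻ y, (∫⁻ x, w (x, y) ^ 2 ∂ν) ^ (1 / 2 : ℝ) ∂μ) ^ 2 := by
  have hx : ∀ x, Measurable fun y => w (x, y) := fun x => hw.comp (by fun_prop)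
  have hy : ∀ y, Measurable fun x => w (x, y) := fun y => hw.comp (by fun_prop)
  set N : Y → ℝ≥0∞ := fun y => (∫⁻ x, w (x, y) ^ 2 ∂ν) ^ (1 / 2 : ℝ) with hN
  have hNm : Measurable N := by
    apply Measurable.pow_const
    exact Measurable.lintegral_prod_left' (hw.pow_const 2)
  calc ∫⁻ x, (∫⁻ y, w (x, y) ∂μ) ^ 2 ∂ν
      = ∫⁻ x, ∫⁻ p, w (x, p.1) * w (x, p.2) ∂(μ.prod μ) ∂ν := by
        congr 1 with x
        rw [lintegral_prod_mul (hx x).aemeasurable (hx x).aemeasurable, sq]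
    _ = ∫⁻ p, ∫⁻ x, w (x, p.1) * w (x, p.2) ∂ν ∂(μ.prod μ) := by
        rw [lintegral_lintegral_swap]
        apply Measurable.aemeasurable
        exact (hw.comp (by fun_prop)).mul (hw.comp (by fun_prop))
    _ ≤ ∫⁻ p, N p.1 * N p.2 ∂(μ.prod μ) := by
        refine lintegral_mono fun p => ?_
        have := ENNReal.lintegral_mul_le_Lp_mul_Lq ν Real.HolderConjugate.two_two
          (hy p.1).aemeasurable (hy p.2).aemeasurable
        simpa [hN] using this
    _ = _ := by rw [lintegral_prod_mul hNm.aemeasurable hNm.aemeasurable, sq]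

lemma eLpNorm_two_eq {X : Type*} [MeasurableSpace X] (ν : Measure X) (f : X → ℂ) :
    eLpNorm f 2 ν = (∫⁻ x, ‖f x‖ₑ ^ 2 ∂ν) ^ (1 / 2 : ℝ) := by
  rw [eLpNorm_eq_lintegral_rpow_enorm_toReal (by norm_num) (by norm_num)]
  simp

lemma minkowski {d : ℕ} (μ : Measure ℝ) [SFinite μ] (h : ℝ → Vd d → ℂ) (hc : ∀ τ, Continuous (h τ)) :
    eLpNorm (fun x => ∫ τ, h τ x ∂μ) 2 volume ≤ ∫⁻ τ, eLpNorm (h τ) 2 volume ∂μ := by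
  set M : Set (Vd d) := {x | AEMeasurable (fun τ => h τ x) μ} with hM
  have hMc : IsClosed M := by
    rw [← isSeqClosed_iff_isClosed]
    intro xs x hxs hx
    exact aemeasurable_of_tendsto_metrizable_ae Filter.atTop hxs
      (Filter.Eventually.of_forall fun τ => ((hc τ).tendsto x).comp hx)
  have hD : ∀ x, x ∉ M → ∫ τ, h τ x ∂μ = 0 := fun x hx =>
    integral_undef fun hi => hx hi.1.aemeasurable
  rcases M.eq_empty_or_nonempty with hE | hne
  · have : (fun x => ∫ τ, h τ x ∂μ) = 0 := by
      ext x; exact hD x (by simp [hE])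
    rw [this]; simp
  have : Nonempty M := hne.to_subtype
  obtain ⟨xs, hxs⟩ := TopologicalSpace.exists_dense_seq M
  have hae : ∀ᵐ τ ∂μ, ∀ n, h τ (xs n) = (xs n).2.mk _ τ :=
    ae_all_iff.2 fun n => (xs n).2.ae_eq_mk
  obtain ⟨S, hSsub, hSm, hS⟩ : ∃ S : Set ℝ, (∀ τ ∈ S, ∀ n, h τ (xs n) = (xs n).2.mk _ τ) ∧
      MeasurableSet S ∧ ∀ᵐ τ ∂μ, τ ∈ S := by
    obtain ⟨N, hN1, hN2, hN3⟩ := exists_measurable_superset_of_null (ae_iff.1 hae)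
    refine ⟨Nᶜ, fun τ hτ => ?_, hN2.compl, ?_⟩
    · by_contra hh; exact hτ (hN1 hh)
    · rw [ae_iff]; simpa using hN3
  set u : M → ℝ → ℂ := fun x τ => S.indicator (fun τ => h τ x) τ with hu
  have huc : ∀ τ, Continuous fun x => u x τ := by
    intro τ
    by_cases hτ : τ ∈ S
    · simp only [hu, Set.indicator_of_mem hτ]
      exact (hc τ).comp continuous_subtype_val
    · simp only [hu, Set.indicator_of_notMem hτ]
      exact continuous_const
  have hun : ∀ n, Measurable (u (xs n)) := by
    intro n
    have : u (xs n) = S.indicator ((xs n).2.mk _) := by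
      ext τ
      by_cases hτ : τ ∈ S
      · simp only [hu, Set.indicator_of_mem hτ]; exact hSsub τ hτ n
      · simp only [hu, Set.indicator_of_notMem hτ]
    rw [this]
    exact (xs n).2.measurable_mk.indicator hSm
  have hum : ∀ x, Measurable (u x) := by
    intro x
    obtain ⟨ys, hys, hyt⟩ := mem_closure_iff_seq_limit.1 (hxs x)
    refine measurable_of_tendsto_metrizable (f := fun n => u (ys n)) ?_
      (tendsto_pi_nhds.2 fun τ => ((huc τ).tendsto x).comp hyt)
    intro n
    obtain ⟨m, hm⟩ := hys n
    rw [← hm]; exact hun m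
  have hjm : Measurable (Function.uncurry u) := measurable_uncurry_of_continuous_of_measurable huc hum
  set ν : Measure M := (volume : Measure (Vd d)).comap Subtype.val with hν
  have hsub : ∀ φ : Vd d → ℝ≥0∞, ∫⁻ x : M, φ x ∂ν = ∫⁻ x in M, φ x := fun φ =>
    lintegral_subtype_comap hMc.measurableSet φ
  have hνs : SFinite ν := by
    have : SigmaFinite ν := ⟨⟨{
      set := fun n => Set.preimage Subtype.val (spanningSets (volume : Measure (Vd d)) n)
      set_mem := fun _ => trivial
      finite := fun n => by
        rw [hν, (MeasurableEmbedding.subtype_coe hMc.measurableSet).comap_apply]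
        exact (measure_mono (Set.image_preimage_subset _ _)).trans_lt (measure_spanningSets_lt_top _ n)
      spanning := by rw [← Set.preimage_iUnion, iUnion_spanningSets, Set.preimage_univ] }⟩⟩
    infer_instance
  have h1 : ∫⁻ x, ‖∫ τ, h τ x ∂μ‖ₑ ^ 2 ≤ ∫⁻ x : M, (∫⁻ τ, ‖u x τ‖ₑ ∂μ) ^ 2 ∂ν := by
    calc _ = ∫⁻ x in M, ‖∫ τ, h τ x ∂μ‖ₑ ^ 2 := by
          rw [← lintegral_indicator hMc.measurableSet]
          congr 1 with x
          by_cases hx : x ∈ M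
          · rw [Set.indicator_of_mem hx]
          · rw [Set.indicator_of_notMem hx, hD x hx]; simp
      _ = ∫⁻ x : M, ‖∫ τ, h τ x ∂μ‖ₑ ^ 2 ∂ν := (hsub _).symm
      _ ≤ _ := by
          gcongr with x
          refine (enorm_integral_le_lintegral_enorm _).trans (le_of_eq ?_)
          apply lintegral_congr_ae
          filter_upwards [hS] with τ hτ
          simp only [hu, Set.indicator_of_mem hτ]
  have h2 := mink_sq ν μ (w := fun q => ‖Function.uncurry u q‖ₑ) hjm.enorm
  simp only [Function.uncurry] at h2
  rw [eLpNorm_two_eq]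
  calc _ ≤ ((∫⁻ τ, (∫⁻ x, ‖u x τ‖ₑ ^ 2 ∂ν) ^ (1 / 2 : ℝ) ∂μ) ^ 2) ^ (1 / 2 : ℝ) :=
        ENNReal.rpow_le_rpow (h1.trans h2) (by norm_num)
    _ = ∫⁻ τ, (∫⁻ x, ‖u x τ‖ₑ ^ 2 ∂ν) ^ (1 / 2 : ℝ) ∂μ := by
        rw [← ENNReal.rpow_natCast, ← ENNReal.rpow_mul]; norm_num
    _ ≤ _ := by
        refine lintegral_mono fun τ => ?_
        rw [eLpNorm_two_eq]
        apply ENNReal.rpow_le_rpow _ (by norm_num)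
        calc _ ≤ ∫⁻ x : M, ‖h τ x‖ₑ ^ 2 ∂ν := by
              refine lintegral_mono fun x => ?_
              by_cases hτ : τ ∈ S
              · simp only [hu, Set.indicator_of_mem hτ]; exact le_rfl
              · simp [hu, Set.indicator_of_notMem hτ]
          _ = ∫⁻ x in M, ‖h τ x‖ₑ ^ 2 := hsub fun x => ‖h τ x‖ₑ ^ 2
          _ ≤ _ := setLIntegral_le_lintegral _ _

/-- for 1 ≤ γ₁ ≤ γ ≤ ∞ there is C such that for any k in the first
octant with |k|_∞ ≥ 1 and any f with Fourier support in k+[0,1)^d for all t > 0: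
‖∫₀^t e^{(t−τ)Δ} f(τ) dτ‖_{L^γ_t L²_x} ≤ C |k|^{−2(1/γ + 1 − 1/γ₁)} ‖f‖_{L^{γ₁}_t L²_x}. -/
theorem stmt6 (γ γ₁ : ℝ≥0∞) (h1 : 1 ≤ γ₁) (h2 : γ₁ ≤ γ) :
    ∃ C : ℝ, 0 < C ∧ ∀ (d : ℕ), 1 ≤ d → ∀ (k : Fin d → ℤ),
      (∀ i, 0 ≤ k i) → (∃ i, 1 ≤ k i) →
      ∀ f : ℝ → Vd d → ℂ,
        (∀ t : ℝ, 0 < t → Function.support (𝓕 (f t)) ⊆ cube d k) →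
        timeNorm γ (fun t => eLpNorm (duhamel d f t) 2 volume) ≤
          ENNReal.ofReal
              (C * ‖toV k‖ ^ (-(2 * ((γ⁻¹).toReal + 1 - (γ₁⁻¹).toReal)))) *
            timeNorm γ₁ (fun t => eLpNorm (f t) 2 volume) := by
  refine ⟨1, one_pos, ?_⟩
  intro d _ k hk0 ⟨i₀, hi₀⟩ f hf
  set K : ℝ := ‖toV k‖ ^ 2 with hK
  have hnorm : 0 < ‖toV k‖ := by
    rw [norm_pos_iff]
    intro h
    have h' : toV k i₀ = 0 := by rw [h]; rfl
    have h'' : ((k i₀ : ℤ) : ℝ) = 0 := h'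
    have : k i₀ = 0 := by exact_mod_cast h''
    omega
  have hK0 : 0 < K := by positivity
  obtain ⟨g', hg'm, hg'le, hg'eq⟩ := exists_measurable_le_forall_setLIntegral_eq (μ := (volume : Measure ℝ))
    (fun τ => ENNReal.ofReal (Real.exp (τ * K)) * eLpNorm (f τ) 2 volume)
  set g : ℝ → ℝ≥0∞ := fun τ => ENNReal.ofReal (Real.exp (-(τ * K))) * g' τ with hg
  have hgm : Measurable g := Measurable.mul (by fun_prop) hg'm
  have hee : ∀ a b : ℝ, ENNReal.ofReal (Real.exp a) * ENNReal.ofReal (Real.exp b) =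
      ENNReal.ofReal (Real.exp (a + b)) := by
    intro a b
    rw [Real.exp_add, ENNReal.ofReal_mul (Real.exp_pos _).le]
  have hgle : ∀ τ, g τ ≤ eLpNorm (f τ) 2 volume := by
    intro τ
    calc g τ ≤ ENNReal.ofReal (Real.exp (-(τ * K))) *
          (ENNReal.ofReal (Real.exp (τ * K)) * eLpNorm (f τ) 2 volume) := by
          rw [hg]; dsimp only; gcongr; exact hg'le τ
      _ = _ := by rw [← mul_assoc, hee]; simp
  have hmain : ∀ t, 0 < t → eLpNorm (duhamel d f t) 2 volume ≤
      ∫⁻ τ in Set.Ioc 0 t, ENNReal.ofReal (Real.exp (-((t - τ) * K))) * g τ := by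
    intro t _
    calc eLpNorm (duhamel d f t) 2 volume
        ≤ ∫⁻ τ in Set.Ioc 0 t, eLpNorm (heat d (t - τ) (f τ)) 2 volume :=
          minkowski _ (fun τ => heat d (t - τ) (f τ)) fun τ => fourierInv_continuous _
      _ ≤ ∫⁻ τ in Set.Ioc 0 t, ENNReal.ofReal (Real.exp (-(t * K))) *
            (ENNReal.ofReal (Real.exp (τ * K)) * eLpNorm (f τ) 2 volume) := by
          refine setLIntegral_mono' measurableSet_Ioc fun τ hτ => ?_
          refine (heat_bound hk0 (hf τ hτ.1) (sub_nonneg.2 hτ.2)).trans (le_of_eq ?_)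
          rw [← mul_assoc, hee]
          congr 3
          ring
      _ = ENNReal.ofReal (Real.exp (-(t * K))) * ∫⁻ τ in Set.Ioc 0 t, 
            (ENNReal.ofReal (Real.exp (τ * K)) * eLpNorm (f τ) 2 volume) :=
          lintegral_const_mul' _ _ ENNReal.ofReal_ne_top
      _ = ENNReal.ofReal (Real.exp (-(t * K))) * ∫⁻ τ in Set.Ioc 0 t, g' τ := by
          rw [hg'eq]
      _ = ∫⁻ τ in Set.Ioc 0 t, ENNReal.ofReal (Real.exp (-(t * K))) * g' τ :=
          (lintegral_const_mul' _ _ ENNReal.ofReal_ne_top).symm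
      _ = _ := by
          congr 1 with τ
          rw [hg]; dsimp only
          rw [← mul_assoc, hee]
          congr 3
          ring
  refine (timeNorm_mono γ hmain).trans ((young hK0 h1 h2 hgm).trans ?_)
  gcongr
  · apply le_of_eq
    rw [one_mul, ← ENNReal.ofReal_inv_of_pos hK0, ENNReal.ofReal_rpow_of_pos (inv_pos.2 hK0), hK,
      ← Real.rpow_natCast, ← Real.rpow_neg hnorm.le, ← Real.rpow_mul hnorm.le]
    congr 2
    push_cast
    ring
  · exact timeNorm_mono γ₁ fun t _ => hgle t
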